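/- If b ∈ P and J_1, J_2 ⊆ {1,…,d} are subsets of equal cardinality with b·η_{J_1} = η_{J_2} as simplices of BT, then J_1 = J_2 and b ∈ P_0Z. In particular, for distinct subsets J ⊆ {1,…,d} the simplices η_J lie in distinct P-orbits, and the stabilizer of η_J in P is contained in P_0Z. -/

import Mathlib

noncomputable section

open scoped Classical Pointwise

variable (p : ℕ) [Fact (Nat.Prime p)] (d : ℕ)

/-- The vector space `ℚ_p^{d+1}`. -/
abbrev Vsp := Fin (d + 1) → ℚ_[p]

/-- The general linear group `GL_{d+1}(ℚ_p)`. -/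
abbrev GL' := (Matrix (Fin (d + 1)) (Fin (d + 1)) ℚ_[p])ˣ

/-- A `ℤ_p`-lattice in `ℚ_p^{d+1}`: a finitely generated `ℤ_p`-submodule which spans
`ℚ_p^{d+1}` over `ℚ_p`. -/
def IsLattice (L : Submodule ℤ_[p] (Vsp p d)) : Prop :=
  L.FG ∧ Submodule.span ℚ_[p] (L : Set (Vsp p d)) = ⊤

/-- The type of lattices. -/
def LatZ := {L : Submodule ℤ_[p] (Vsp p d) // IsLattice p d L}

/-- Scalar multiplication by `c ∈ ℚ_p` as a `ℤ_p`-linear endomorphism of `ℚ_p^{d+1}`. -/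
def scalarMap (c : ℚ_[p]) : Vsp p d →ₗ[ℤ_[p]] Vsp p d where
  toFun v := c • v
  map_add' := smul_add c
  map_smul' a v := (smul_comm a c v).symm

lemma scalarMap_one : scalarMap p d 1 = LinearMap.id := by
  ext v
  simp [scalarMap]

lemma scalarMap_comp (c c' : ℚ_[p]) :
    (scalarMap p d c).comp (scalarMap p d c') = scalarMap p d (c * c') := by
  ext v
  simp [scalarMap, mul_smul]

/-- Homothety equivalence of lattices. -/
def latSetoid : Setoid (LatZ p d) where
  r L L' := ∃ c : ℚ_[p]ˣ, Submodule.map (scalarMap p d (c : ℚ_[p])) L.1 = L'.1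
  iseqv := by
    constructor
    · intro L
      exact ⟨1, by rw [Units.val_one, scalarMap_one, Submodule.map_id]⟩
    · rintro L L' ⟨c, hc⟩
      refine ⟨c⁻¹, ?_⟩
      rw [← hc, ← Submodule.map_comp, scalarMap_comp,
        show ((c⁻¹ : ℚ_[p]ˣ) : ℚ_[p]) * (c : ℚ_[p]) = 1 by
          rw [← Units.val_mul, inv_mul_cancel, Units.val_one],
        scalarMap_one, Submodule.map_id]
    · rintro L L' L'' ⟨c, hc⟩ ⟨c', hc'⟩
      refine ⟨c' * c, ?_⟩
      rw [← hc', ← hc, ← Submodule.map_comp, scalarMap_comp, ← Units.val_mul]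

/-- The set of vertices of the Bruhat–Tits building: homothety classes of lattices. -/
def Vtx := Quotient (latSetoid p d)

/-- The action of `g ∈ GL_{d+1}(ℚ_p)` on `ℚ_p^{d+1}`, as a `ℤ_p`-linear map. -/
def glMap (g : GL' p d) : Vsp p d →ₗ[ℤ_[p]] Vsp p d where
  toFun v := (g : Matrix (Fin (d + 1)) (Fin (d + 1)) ℚ_[p]).mulVec v
  map_add' v w := Matrix.mulVec_add _ v w
  map_smul' a v := by
    have h1 : a • v = (a : ℚ_[p]) • v := (algebraMap_smul ℚ_[p] a v).symm
    have h2 : a • (g : Matrix (Fin (d + 1)) (Fin (d + 1)) ℚ_[p]).mulVec v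
        = (a : ℚ_[p]) • (g : Matrix (Fin (d + 1)) (Fin (d + 1)) ℚ_[p]).mulVec v :=
      (algebraMap_smul ℚ_[p] a _).symm
    simp only [RingHom.id_apply, h1, h2, Matrix.mulVec_smul]

lemma glMap_surjective (g : GL' p d) : Function.Surjective (glMap p d g) := by
  intro w
  refine ⟨(g⁻¹ : GL' p d).val.mulVec w, ?_⟩
  show (g : Matrix (Fin (d + 1)) (Fin (d + 1)) ℚ_[p]).mulVec
      ((g⁻¹ : GL' p d).val.mulVec w) = w
  rw [Matrix.mulVec_mulVec, Units.mul_inv, Matrix.one_mulVec]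

lemma IsLattice.map {L : Submodule ℤ_[p] (Vsp p d)} (hL : IsLattice p d L) (g : GL' p d) :
    IsLattice p d (Submodule.map (glMap p d g) L) := by
  constructor
  · exact hL.1.map _
  · have h1 : (Submodule.map (glMap p d g) L : Set (Vsp p d)) = glMap p d g '' L :=
      Submodule.map_coe _ _
    have h2 : ⇑(glMap p d g) = ⇑(Matrix.mulVecLin (g : Matrix _ _ _)) := rfl
    rw [h1, h2, Submodule.span_image, hL.2, Submodule.map_top, LinearMap.range_eq_top]
    exact glMap_surjective p d g

lemma glMap_scalar_comm (g : GL' p d) (c : ℚ_[p]) :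
    (glMap p d g).comp (scalarMap p d c) = (scalarMap p d c).comp (glMap p d g) := by
  refine LinearMap.ext fun v => ?_
  show (g : Matrix (Fin (d + 1)) (Fin (d + 1)) ℚ_[p]).mulVec (c • v)
      = c • (g : Matrix (Fin (d + 1)) (Fin (d + 1)) ℚ_[p]).mulVec v
  rw [Matrix.mulVec_smul]

/-- The action of `GL_{d+1}(ℚ_p)` on lattices. -/
def latAct (g : GL' p d) (L : LatZ p d) : LatZ p d :=
  ⟨Submodule.map (glMap p d g) L.1, IsLattice.map p d L.2 g⟩

/-- The action of `GL_{d+1}(ℚ_p)` on the vertices of the Bruhat–Tits building. -/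
def vAct (g : GL' p d) : Vtx p d → Vtx p d :=
  Quotient.map (latAct p d g) (by
    rintro L L' ⟨c, hc⟩
    refine ⟨c, ?_⟩
    show Submodule.map (scalarMap p d (c : ℚ_[p])) (Submodule.map (glMap p d g) L.1)
        = Submodule.map (glMap p d g) L'.1
    rw [← Submodule.map_comp, ← glMap_scalar_comm, Submodule.map_comp, hc])

/-- The standard lattice `ℤ_p^{d+1} ⊆ ℚ_p^{d+1}`. -/
def L0 : Submodule ℤ_[p] (Vsp p d) :=
  Submodule.span ℤ_[p] (Set.range fun i : Fin (d + 1) => Pi.single i (1 : ℚ_[p]))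

lemma isLattice_L0 : IsLattice p d (L0 p d) := by
  constructor
  · exact Submodule.fg_span (Set.finite_range _)
  · have hb : Submodule.span ℚ_[p]
        (Set.range fun i : Fin (d + 1) => Pi.single i (1 : ℚ_[p])) = ⊤ := by
      have hsp := Module.Basis.span_eq (Pi.basisFun ℚ_[p] (Fin (d + 1)))
      have hr : ⇑(Pi.basisFun ℚ_[p] (Fin (d + 1)))
          = fun i : Fin (d + 1) => Pi.single i (1 : ℚ_[p]) := by
        funext i
        exact Pi.basisFun_apply ℚ_[p] (Fin (d + 1)) i
      rwa [hr] at hsp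
    refine le_antisymm le_top ?_
    rw [← hb]
    exact Submodule.span_mono (fun x hx => Submodule.subset_span hx)

/-- The origin `x_0 = [ℤ_p^{d+1}]` of the Bruhat–Tits building. -/
def x0 : Vtx p d := Quotient.mk _ ⟨L0 p d, isLattice_L0 p d⟩

/-- The diagonal element `φ_k = diag(1, …, 1, p, …, p)` with `k` entries equal to `1`. -/
def phiDiag (k : ℕ) : GL' p d where
  val := Matrix.diagonal fun j : Fin (d + 1) => if (j : ℕ) < k then 1 else (p : ℚ_[p])
  inv := Matrix.diagonal fun j : Fin (d + 1) => if (j : ℕ) < k then 1 else (p : ℚ_[p])⁻¹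
  val_inv := by
    have hp : (p : ℚ_[p]) ≠ 0 :=
      Nat.cast_ne_zero.mpr (Fact.out (p := Nat.Prime p)).ne_zero
    rw [Matrix.diagonal_mul_diagonal]
    have h1 : (fun j : Fin (d + 1) =>
        (if (j : ℕ) < k then 1 else (p : ℚ_[p])) * (if (j : ℕ) < k then 1 else (p : ℚ_[p])⁻¹))
        = fun _ => 1 := by
      funext j
      by_cases h : (j : ℕ) < k <;> simp [h, mul_inv_cancel₀ hp]
    rw [h1, Matrix.diagonal_one]
  inv_val := by
    have hp : (p : ℚ_[p]) ≠ 0 :=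
      Nat.cast_ne_zero.mpr (Fact.out (p := Nat.Prime p)).ne_zero
    rw [Matrix.diagonal_mul_diagonal]
    have h1 : (fun j : Fin (d + 1) =>
        (if (j : ℕ) < k then 1 else (p : ℚ_[p])⁻¹) * (if (j : ℕ) < k then 1 else (p : ℚ_[p])))
        = fun _ => 1 := by
      funext j
      by_cases h : (j : ℕ) < k <;> simp [h, inv_mul_cancel₀ hp]
    rw [h1, Matrix.diagonal_one]

/-- The vertex `x_i := φ_i · x_0` for `1 ≤ i ≤ d`. -/
def xVtx (i : Fin d) : Vtx p d := vAct p d (phiDiag p d ((i : ℕ) + 1)) (x0 p d)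

/-- The `q`-simplex `η_J = {x_0, x_{j_1}, …, x_{j_q}}` for `J ⊆ {1, …, d}`. -/
def etaJ (J : Finset (Fin d)) : Finset (Vtx p d) :=
  insert (x0 p d) (J.image (xVtx p d))

/-- The Borel subgroup `P` of lower triangular matrices in `GL_{d+1}(ℚ_p)`, as a set. -/
def Pset : Set (GL' p d) :=
  {g | ∀ i j : Fin (d + 1), i < j → (g : Matrix (Fin (d + 1)) (Fin (d + 1)) ℚ_[p]) i j = 0}

/-- The unipotent radical `N` of `P`: lower unitriangular matrices, as a set. -/
def Nset : Set (GL' p d) :=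
  {g | (∀ i : Fin (d + 1), (g : Matrix (Fin (d + 1)) (Fin (d + 1)) ℚ_[p]) i i = 1) ∧
    ∀ i j : Fin (d + 1), i < j → (g : Matrix (Fin (d + 1)) (Fin (d + 1)) ℚ_[p]) i j = 0}

/-- The diagonal torus `T`, as a set. -/
def Tset : Set (GL' p d) :=
  {t | ∀ i j : Fin (d + 1), i ≠ j → (t : Matrix (Fin (d + 1)) (Fin (d + 1)) ℚ_[p]) i j = 0}

/-- The compact group `N_0` of lower unitriangular matrices with entries in `ℤ_p`,
as a set. -/
def N₀set : Set (GL' p d) :=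
  {g | g ∈ Nset p d ∧
    ∀ i j : Fin (d + 1), ‖(g : Matrix (Fin (d + 1)) (Fin (d + 1)) ℚ_[p]) i j‖ ≤ 1}

/-- The group `T_0` of diagonal matrices in `GL_{d+1}(ℤ_p)`, as a set. -/
def T₀set : Set (GL' p d) :=
  {t | t ∈ Tset p d ∧
    ∀ i : Fin (d + 1), ‖(t : Matrix (Fin (d + 1)) (Fin (d + 1)) ℚ_[p]) i i‖ = 1}

/-- The set `P_0 = T_0 · N_0`. -/
def P₀set : Set (GL' p d) := T₀set p d * N₀set p d

/-- The centre `Z ≅ ℚ_p^×` of `GL_{d+1}(ℚ_p)` (the invertible scalar matrices),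
as a set. -/
def Zset : Set (GL' p d) :=
  {z | ∃ c : ℚ_[p]ˣ,
    (z : Matrix (Fin (d + 1)) (Fin (d + 1)) ℚ_[p]) = (c : ℚ_[p]) • (1 : Matrix _ _ _)}

/-- The dominant submonoid `T_+ = {t ∈ T ∣ tN_0t⁻¹ ⊆ N_0}`, as a set. -/
def Tplusset : Set (GL' p d) :=
  {t | t ∈ Tset p d ∧ ∀ n ∈ N₀set p d, t * n * t⁻¹ ∈ N₀set p d}

/-- The monoid `P_+ = N_0 · T_+`, as a set. -/
def Pplusset : Set (GL' p d) := N₀set p d * Tplusset p d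

/-
An element of `P` fixing `x_0` lies in `P_0 Z`: after rescaling, it and its inverse are integral and
lower triangular, so its diagonal entries are units. Hence `g x_0 = h x_0` with `g, h ∈ P` forces
the diagonals of `g` and `h` to have proportional norms. Apply this to `b φ_j x_0 = φ_k x_0`; the
last entry of every `φ_j` with `j ≤ d` is `p`, so the proportionality factor is the same for all
`j` and `k`, and `‖b_ii‖ ‖(φ_j)_ii‖ = ‖b_dd‖ ‖(φ_k)_ii‖`. The vertex `b x_0` gives
`‖b_ii‖ ≥ ‖b_dd‖`, the vertex sent to `x_0` gives `‖b_ii‖ ≤ ‖b_dd‖`. Thus all `‖b_ii‖` agree,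
and `b` fixes every vertex of the simplex, `x_0` among them.
-/

section LowerTriangular

variable {n R : Type*} [Fintype n] [LinearOrder n]

lemma mul_apply_self_of_isLowerTriangular [NonUnitalNonAssocSemiring R] {A B : Matrix n n R}
    (hA : A.IsLowerTriangular) (hB : B.IsLowerTriangular) (i : n) :
    (A * B) i i = A i i * B i i := by
  rw [Matrix.mul_apply]
  refine Finset.sum_eq_single_of_mem i (Finset.mem_univ i) fun j _ hji => ?_
  rcases hji.lt_or_gt with hlt | hgt
  · rw [hB (OrderDual.toDual_lt_toDual.mpr hlt), mul_zero]
  · rw [hA (OrderDual.toDual_lt_toDual.mpr hgt), zero_mul]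

variable (n R) in
/-- The Borel subgroup of lower triangular matrices in `GL_n(R)`. Over `ℚ_p` its carrier is `Pset`;
the bundled form provides closure under products and inverses. -/
def lowerBorel [CommRing R] : Subgroup (Matrix n n R)ˣ where
  carrier := {g | g.val.IsLowerTriangular}
  mul_mem' hg hh := hg.mul hh
  one_mem' := Matrix.blockTriangular_one
  inv_mem' {g} hg := by
    let := g.invertible
    change g⁻¹.val.IsLowerTriangular
    rw [Matrix.coe_units_inv]
    exact Matrix.blockTriangular_inv_of_blockTriangular hg

lemma mul_apply_self_of_mem_lowerBorel [CommRing R] {g h : (Matrix n n R)ˣ}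
    (hg : g ∈ lowerBorel n R) (hh : h ∈ lowerBorel n R) (i : n) :
    (g * h).val i i = g.val i i * h.val i i :=
  mul_apply_self_of_isLowerTriangular hg hh i

lemma inv_apply_self_mul_of_mem_lowerBorel [CommRing R] {g : (Matrix n n R)ˣ}
    (hg : g ∈ lowerBorel n R) (i : n) : g⁻¹.val i i * g.val i i = 1 := by
  rw [← mul_apply_self_of_mem_lowerBorel (inv_mem hg) hg, inv_mul_cancel, Units.val_one,
    Matrix.one_apply_eq]

end LowerTriangular

section Building

variable {p : ℕ} [Fact p.Prime] {d : ℕ}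

lemma mem_Pset_iff_mem_lowerBorel {g : GL' p d} :
    g ∈ Pset p d ↔ g ∈ lowerBorel (Fin (d + 1)) ℚ_[p] :=
  Iff.rfl

lemma mem_L0_iff {v : Vsp p d} : v ∈ L0 p d ↔ ∀ i, ‖v i‖ ≤ 1 := by
  have hbasis : ⇑(Pi.basisFun ℚ_[p] (Fin (d + 1))) = fun i => Pi.single i 1 :=
    funext (Pi.basisFun_apply _ _)
  rw [L0, ← hbasis, Module.Basis.mem_span_iff_repr_mem]
  refine forall_congr' fun i => ⟨?_, fun hi => ⟨⟨v i, hi⟩, rfl⟩⟩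
  rintro ⟨a, ha⟩
  exact (congrArg norm ha).symm.trans_le a.norm_le_one

lemma norm_apply_le_one_of_map_L0_le {g : GL' p d}
    (h : Submodule.map (glMap p d g) (L0 p d) ≤ L0 p d) (i j : Fin (d + 1)) :
    ‖g.val i j‖ ≤ 1 := by
  have hmem : glMap p d g (Pi.single j 1) ∈ L0 p d :=
    h (Submodule.mem_map_of_mem (Submodule.subset_span ⟨j, rfl⟩))
  simpa only [glMap, LinearMap.coe_mk, AddHom.coe_mk, Matrix.mulVec_single_one,
    Matrix.col_apply] using mem_L0_iff.mp hmem i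

lemma map_glMap_one (L : Submodule ℤ_[p] (Vsp p d)) : L.map (glMap p d 1) = L := by
  have hone : glMap p d 1 = LinearMap.id := LinearMap.ext Matrix.one_mulVec
  rw [hone, Submodule.map_id]

lemma map_glMap_mul (g h : GL' p d) (L : Submodule ℤ_[p] (Vsp p d)) :
    L.map (glMap p d (g * h)) = (L.map (glMap p d h)).map (glMap p d g) := by
  have hmul : glMap p d (g * h) = (glMap p d g).comp (glMap p d h) :=
    LinearMap.ext fun v => (Matrix.mulVec_mulVec v g.val h.val).symm
  rw [hmul, Submodule.map_comp]

lemma map_glMap_smul (c : ℚ_[p]ˣ) (g : GL' p d) (L : Submodule ℤ_[p] (Vsp p d)) :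
    L.map (glMap p d (c • g)) = (L.map (glMap p d g)).map (scalarMap p d (c : ℚ_[p])) := by
  have hsmul : glMap p d (c • g) = (scalarMap p d (c : ℚ_[p])).comp (glMap p d g) :=
    LinearMap.ext fun v => Matrix.smul_mulVec (c : ℚ_[p]) g.val v
  rw [hsmul, Submodule.map_comp]

lemma vAct_one (x : Vtx p d) : vAct p d 1 x = x :=
  Quotient.inductionOn x fun L =>
    congrArg (Quotient.mk (latSetoid p d)) (Subtype.ext (map_glMap_one L.1))

lemma vAct_mul (g h : GL' p d) (x : Vtx p d) :
    vAct p d (g * h) x = vAct p d g (vAct p d h x) :=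
  Quotient.inductionOn x fun L =>
    congrArg (Quotient.mk (latSetoid p d)) (Subtype.ext (map_glMap_mul g h L.1))

lemma vAct_smul (c : ℚ_[p]ˣ) (g : GL' p d) (x : Vtx p d) : vAct p d (c • g) x = vAct p d g x :=
  Quotient.inductionOn x fun L =>
    (Quotient.sound ⟨c, (map_glMap_smul c g L.1).symm⟩ :
      Quotient.mk (latSetoid p d) (latAct p d g L) = Quotient.mk _ (latAct p d (c • g) L)).symm

lemma exists_map_smul_L0_eq_of_vAct_x0_eq {g : GL' p d} (h : vAct p d g (x0 p d) = x0 p d) :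
    ∃ c : ℚ_[p]ˣ, (L0 p d).map (glMap p d (c • g)) = L0 p d := by
  obtain ⟨c, hc⟩ := Quotient.exact h
  exact ⟨c, (map_glMap_smul c g _).trans hc⟩

lemma smul_mem_Pset (c : ℚ_[p]ˣ) {g : GL' p d} (hg : g ∈ Pset p d) : c • g ∈ Pset p d :=
  fun i j hij => by
    rw [Units.val_smul, Matrix.smul_apply, hg i j hij, smul_zero]

lemma mem_P₀set_of_norm {g : GL' p d} (hg : g ∈ Pset p d) (hdiag : ∀ i, ‖g.val i i‖ = 1)
    (hint : ∀ i j, ‖g.val i j‖ ≤ 1) : g ∈ P₀set p d := by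
  have hne (i : Fin (d + 1)) : g.val i i ≠ 0 := norm_pos_iff.mp (hdiag i ▸ one_pos)
  let t : GL' p d := Units.map (Matrix.diagonalRingHom (Fin (d + 1)) ℚ_[p]).toMonoidHom
    (MulEquiv.piUnits.symm fun i => Units.mk0 (g.val i i) (hne i))
  have ht : t.val = Matrix.diagonal fun i => g.val i i := rfl
  have hinv : t⁻¹.val = Matrix.diagonal fun i => (g.val i i)⁻¹ := rfl
  refine ⟨t, ⟨fun i j hij => ?_, fun i => ?_⟩, t⁻¹ * g, ⟨⟨fun i => ?_, fun i j hij => ?_⟩,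
    fun i j => ?_⟩, mul_inv_cancel_left t g⟩
  · rw [ht, Matrix.diagonal_apply_ne _ hij]
  · rw [ht, Matrix.diagonal_apply_eq, hdiag]
  · rw [Units.val_mul, hinv, Matrix.diagonal_mul, inv_mul_cancel₀ (hne i)]
  · rw [Units.val_mul, hinv, Matrix.diagonal_mul, hg i j hij, mul_zero]
  · rw [Units.val_mul, hinv, Matrix.diagonal_mul, norm_mul, norm_inv, hdiag, inv_one, one_mul]
    exact hint i j

lemma norm_apply_self_of_mem_P₀set {g : GL' p d} (hg : g ∈ P₀set p d) (i : Fin (d + 1)) :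
    ‖g.val i i‖ = 1 := by
  obtain ⟨t, ⟨ht, htdiag⟩, n, ⟨⟨hndiag, hn⟩, -⟩, rfl⟩ := hg
  have htP : t ∈ lowerBorel (Fin (d + 1)) ℚ_[p] := fun i j hij =>
    ht i j (OrderDual.toDual_lt_toDual.mp hij).ne
  have hnP : n ∈ lowerBorel (Fin (d + 1)) ℚ_[p] := hn
  rw [mul_apply_self_of_mem_lowerBorel htP hnP, hndiag, mul_one, htdiag]

lemma mem_P₀set_of_map_L0_eq {g : GL' p d} (hg : g ∈ Pset p d)
    (h : (L0 p d).map (glMap p d g) = L0 p d) : g ∈ P₀set p d := by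
  have hinv : (L0 p d).map (glMap p d g⁻¹) = L0 p d := by
    conv_lhs => rw [← h, ← map_glMap_mul, inv_mul_cancel, map_glMap_one]
  have hint := norm_apply_le_one_of_map_L0_le h.le
  refine mem_P₀set_of_norm hg (fun i => (hint i i).antisymm ?_) hint
  calc 1 = ‖g⁻¹.val i i‖ * ‖g.val i i‖ := by
        rw [← norm_mul, inv_apply_self_mul_of_mem_lowerBorel hg, norm_one]
    _ ≤ ‖g.val i i‖ := mul_le_of_le_one_left (norm_nonneg _)
        (norm_apply_le_one_of_map_L0_le hinv.le i i)

lemma exists_smul_mem_P₀set_of_vAct_x0_eq {g : GL' p d} (hg : g ∈ Pset p d)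
    (h : vAct p d g (x0 p d) = x0 p d) : ∃ c : ℚ_[p]ˣ, c • g ∈ P₀set p d :=
  (exists_map_smul_L0_eq_of_vAct_x0_eq h).imp fun c hc =>
    mem_P₀set_of_map_L0_eq (smul_mem_Pset c hg) hc

lemma mem_P₀set_mul_Zset_of_vAct_x0_eq {g : GL' p d} (hg : g ∈ Pset p d)
    (h : vAct p d g (x0 p d) = x0 p d) : g ∈ P₀set p d * Zset p d := by
  obtain ⟨c, hc⟩ := exists_smul_mem_P₀set_of_vAct_x0_eq hg h
  refine ⟨c • g, hc, c⁻¹ • 1, ⟨c⁻¹, rfl⟩, ?_⟩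
  ext : 1
  change (c • g.val) * (c⁻¹ • 1) = g.val
  rw [smul_mul_smul_comm, mul_inv_cancel, one_smul, mul_one]

lemma exists_norm_apply_self_eq_of_vAct_x0_eq {g h : GL' p d} (hg : g ∈ Pset p d)
    (hh : h ∈ Pset p d) (heq : vAct p d g (x0 p d) = vAct p d h (x0 p d)) :
    ∃ r : ℝ, ∀ i, ‖g.val i i‖ = r * ‖h.val i i‖ := by
  have hu : h⁻¹ * g ∈ Pset p d := mul_mem (inv_mem (mem_Pset_iff_mem_lowerBorel.mp hh)) hg
  have hfix : vAct p d (h⁻¹ * g) (x0 p d) = x0 p d := by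
    rw [vAct_mul, heq, ← vAct_mul, inv_mul_cancel, vAct_one]
  obtain ⟨c, hc⟩ := exists_smul_mem_P₀set_of_vAct_x0_eq hu hfix
  refine ⟨‖(c : ℚ_[p])‖⁻¹, fun i => ?_⟩
  have hunit : ‖(c : ℚ_[p])‖ * ‖(h⁻¹ * g).val i i‖ = 1 := by
    rw [← norm_mul]
    exact norm_apply_self_of_mem_P₀set hc i
  calc ‖g.val i i‖ = ‖h.val i i‖ * ‖(h⁻¹ * g).val i i‖ := by
        rw [← norm_mul, ← mul_apply_self_of_mem_lowerBorel hh hu, mul_inv_cancel_left]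
    _ = ‖(c : ℚ_[p])‖⁻¹ * ‖h.val i i‖ := by rw [eq_inv_of_mul_eq_one_right hunit, mul_comm]

lemma norm_phiDiag_apply_self (k : ℕ) (i : Fin (d + 1)) :
    ‖(phiDiag p d k).val i i‖ = if (i : ℕ) < k then 1 else (p : ℝ)⁻¹ := by
  have hentry : (phiDiag p d k).val i i = if (i : ℕ) < k then 1 else (p : ℚ_[p]) :=
    Matrix.diagonal_apply_eq _ i
  rw [hentry, apply_ite norm, norm_one, Padic.norm_p]

lemma phiDiag_mem_Pset (k : ℕ) : phiDiag p d k ∈ Pset p d :=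
  fun _ _ hij => Matrix.diagonal_apply_ne _ hij.ne

variable (p) in
/-- The vertex `x_j = φ_j · x_0` for `0 ≤ j ≤ d`. Since `φ_0 = p` is central, `j = 0` gives
the origin, so that all vertices of `η_J` are treated alike. -/
def stdVertex (j : Fin (d + 1)) : Vtx p d := vAct p d (phiDiag p d j) (x0 p d)

lemma stdVertex_zero : stdVertex p (0 : Fin (d + 1)) = x0 p d := by
  have hphi : phiDiag p d 0 =
      Units.mk0 (p : ℚ_[p]) (Nat.cast_ne_zero.mpr (Fact.out : p.Prime).ne_zero) • 1 := by
    ext : 1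
    simpa [phiDiag, Units.smul_def] using (Matrix.smul_one_eq_diagonal (p : ℚ_[p])).symm
  rw [stdVertex, Fin.val_zero, hphi, vAct_smul, vAct_one]

lemma norm_apply_self_mul_of_vAct_stdVertex_eq {b : GL' p d} (hb : b ∈ Pset p d)
    {j k : Fin (d + 1)} (h : vAct p d b (stdVertex p j) = stdVertex p k) (i : Fin (d + 1)) :
    ‖b.val i i‖ * ‖(phiDiag p d j).val i i‖ =
      ‖b.val (Fin.last d) (Fin.last d)‖ * ‖(phiDiag p d k).val i i‖ := by
  have hφ (m : ℕ) := mem_Pset_iff_mem_lowerBorel.mp (phiDiag_mem_Pset (p := p) (d := d) m)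
  have hlast (m : Fin (d + 1)) :
      ‖(phiDiag p d m).val (Fin.last d) (Fin.last d)‖ = (p : ℝ)⁻¹ := by
    rw [norm_phiDiag_apply_self, Fin.val_last, if_neg m.is_le.not_gt]
  rw [stdVertex, ← vAct_mul] at h
  obtain ⟨r, hr⟩ := exists_norm_apply_self_eq_of_vAct_x0_eq (mul_mem hb (hφ j)) (hφ k) h
  simp only [mul_apply_self_of_mem_lowerBorel hb (hφ j), norm_mul] at hr
  have hp : (p : ℝ)⁻¹ ≠ 0 := inv_ne_zero (Nat.cast_ne_zero.mpr (Fact.out : p.Prime).ne_zero)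
  have hbr : ‖b.val (Fin.last d) (Fin.last d)‖ = r :=
    mul_right_cancel₀ hp (by simpa only [hlast] using hr (Fin.last d))
  rw [hr, hbr]

lemma inv_le_norm_phiDiag_apply_self (k : ℕ) (i : Fin (d + 1)) :
    (p : ℝ)⁻¹ ≤ ‖(phiDiag p d k).val i i‖ := by
  rw [norm_phiDiag_apply_self]
  split_ifs
  · exact Nat.cast_inv_le_one p
  · exact le_rfl

lemma norm_apply_self_eq_last_of_vAct_stdVertex {b : GL' p d} (hb : b ∈ Pset p d)
    {j k : Fin (d + 1)} (hk : vAct p d b (stdVertex p 0) = stdVertex p k)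
    (hj : vAct p d b (stdVertex p j) = stdVertex p 0) (i : Fin (d + 1)) :
    ‖b.val i i‖ = ‖b.val (Fin.last d) (Fin.last d)‖ := by
  have hp : (0 : ℝ) < (p : ℝ)⁻¹ := inv_pos.mpr (Nat.cast_pos.mpr (Fact.out : p.Prime).pos)
  have hzero : ‖(phiDiag p d (0 : Fin (d + 1))).val i i‖ = (p : ℝ)⁻¹ := by
    rw [norm_phiDiag_apply_self, Fin.val_zero, if_neg (Nat.not_lt_zero _)]
  have hdiagk := norm_apply_self_mul_of_vAct_stdVertex_eq hb hk i
  have hdiagj := norm_apply_self_mul_of_vAct_stdVertex_eq hb hj i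
  rw [hzero] at hdiagk hdiagj
  refine le_antisymm (le_of_mul_le_mul_right ?_ hp) (le_of_mul_le_mul_right ?_ hp)
  · exact hdiagj ▸ mul_le_mul_of_nonneg_left (inv_le_norm_phiDiag_apply_self _ i) (norm_nonneg _)
  · exact hdiagk ▸ mul_le_mul_of_nonneg_left (inv_le_norm_phiDiag_apply_self _ i) (norm_nonneg _)

lemma eq_of_norm_phiDiag_apply_self_eq {j k : Fin (d + 1)}
    (h : ∀ i, ‖(phiDiag p d j).val i i‖ = ‖(phiDiag p d k).val i i‖) : j = k := by
  have hp : (p : ℝ)⁻¹ ≠ 1 := inv_ne_one.mpr (Nat.cast_ne_one.mpr (Fact.out : p.Prime).ne_one)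
  have hlt (i : Fin (d + 1)) : i < j ↔ i < k := by
    have hi := h i
    simp only [norm_phiDiag_apply_self, Fin.val_fin_lt] at hi
    split_ifs at hi with hij hik hik
    · exact iff_of_true hij hik
    · exact absurd hi.symm hp
    · exact absurd hi hp
    · exact iff_of_false hij hik
  exact eq_of_forall_lt_iff hlt

lemma eq_of_vAct_stdVertex_eq {b : GL' p d} (hb : b ∈ Pset p d)
    (hdiag : ∀ i, ‖b.val i i‖ = ‖b.val (Fin.last d) (Fin.last d)‖) {j k : Fin (d + 1)}
    (h : vAct p d b (stdVertex p j) = stdVertex p k) : j = k := by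
  have hne : ‖b.val (Fin.last d) (Fin.last d)‖ ≠ 0 :=
    norm_ne_zero_iff.mpr
      (right_ne_zero_of_mul_eq_one (inv_apply_self_mul_of_mem_lowerBorel hb (Fin.last d)))
  refine eq_of_norm_phiDiag_apply_self_eq (p := p) fun i => mul_left_cancel₀ hne ?_
  rw [← norm_apply_self_mul_of_vAct_stdVertex_eq hb h i, hdiag i]

/-- The indices `{0} ∪ J ⊆ {0, …, d}` of the vertices of `η_J`; the element `i : Fin d` stands for
`i + 1`, as in `xVtx`. -/
def etaIndices (J : Finset (Fin d)) : Finset (Fin (d + 1)) := insert 0 (J.image Fin.succ)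

lemma zero_mem_etaIndices (J : Finset (Fin d)) : 0 ∈ etaIndices J :=
  Finset.mem_insert_self _ _

lemma succ_mem_etaIndices {J : Finset (Fin d)} {i : Fin d} : i.succ ∈ etaIndices J ↔ i ∈ J := by
  simp [etaIndices]

lemma etaJ_eq_image_stdVertex (J : Finset (Fin d)) :
    etaJ p d J = (etaIndices J).image (stdVertex p) := by
  rw [etaIndices, Finset.image_insert, stdVertex_zero, Finset.image_image]
  rfl

lemma mem_etaIndices_and_vAct_stdVertex_eq {b : GL' p d} (hb : b ∈ Pset p d)
    {J₁ J₂ : Finset (Fin d)} (h : (etaJ p d J₁).image (vAct p d b) = etaJ p d J₂)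
    {j : Fin (d + 1)} (hj : j ∈ etaIndices J₁) :
    j ∈ etaIndices J₂ ∧ vAct p d b (stdVertex p j) = stdVertex p j := by
  simp only [etaJ_eq_image_stdVertex, Finset.image_image] at h
  have hforth {j} (hj : j ∈ etaIndices J₁) :
      ∃ k ∈ etaIndices J₂, stdVertex p k = vAct p d b (stdVertex p j) :=
    Finset.mem_image.mp (h ▸ Finset.mem_image_of_mem _ hj)
  obtain ⟨k₀, -, hk₀⟩ := hforth (zero_mem_etaIndices J₁)
  obtain ⟨j₀, -, hj₀⟩ : ∃ j ∈ etaIndices J₁, vAct p d b (stdVertex p j) = stdVertex p 0 :=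
    Finset.mem_image.mp (h ▸ Finset.mem_image_of_mem _ (zero_mem_etaIndices J₂))
  have hdiag := norm_apply_self_eq_last_of_vAct_stdVertex hb hk₀.symm hj₀
  obtain ⟨k, hk, hjk⟩ := hforth hj
  obtain rfl := eq_of_vAct_stdVertex_eq hb hdiag hjk.symm
  exact ⟨hk, hjk.symm⟩

end Building

/-- If `b ∈ P` and `J_1, J_2 ⊆ {1, …, d}` are subsets of equal
cardinality with `b · η_{J_1} = η_{J_2}` as simplices of the Bruhat–Tits building, then
`J_1 = J_2` and `b ∈ P_0Z`.  In particular, for distinct subsets `J` the simplices `η_J`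
lie in distinct `P`-orbits, and the stabilizer of `η_J` in `P` is contained in
`P_0Z`. -/
theorem stmt14 (p d : ℕ) [Fact (Nat.Prime p)] (hd : 1 ≤ d)
    (b : GL' p d) (hb : b ∈ Pset p d)
    (J1 J2 : Finset (Fin d)) (hcard : J1.card = J2.card)
    (h : Finset.image (vAct p d b) (etaJ p d J1) = etaJ p d J2) :
    J1 = J2 ∧ b ∈ P₀set p d * Zset p d := by
  have hfix {j} (hj : j ∈ etaIndices J1) := mem_etaIndices_and_vAct_stdVertex_eq hb h hj
  have hsub : J1 ⊆ J2 := fun i hi =>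
    succ_mem_etaIndices.mp (hfix (succ_mem_etaIndices.mpr hi)).1
  have hx0 : vAct p d b (x0 p d) = x0 p d := by
    simpa only [stdVertex_zero] using (hfix (zero_mem_etaIndices J1)).2
  exact ⟨Finset.eq_of_subset_of_card_le hsub hcard.ge, mem_P₀set_mul_Zset_of_vAct_x0_eq hb hx0⟩
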